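/- Let p be a prime (the statement in fact holds for any positive integer p). Let w1, w2 be elements of the Weyl group W, let λ ∈ C_ℤ, and let σ ∈ ℤΦ be an element of the root lattice. If w1·λ = w2·λ + pσ, then σ = 0. -/

import Mathlib

/-!
Put `x = λ + ρ`, so that the hypothesis reads `w₁ x = w₂ x + p σ`.  As `λ` lies in the bottom
alcove, `|⟨x, β∨⟩| < p` for every root `β`, and the Weyl group permutes these inequalities.  Pairing
the equation with `β∨` therefore gives `|⟨σ, β∨⟩| < 2` for all roots `β`.

A nonzero `σ ∈ ℤΦ` violates this.  Write `σ = β₁ + ⋯ + βₖ` as a sum of roots with `k` minimal.  Two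
roots at an obtuse angle add up to a root or to zero, so minimality forces `⟪β₁, βⱼ⟫ ≥ 0` for all
`j`, whence `⟨σ, β₁∨⟩ ≥ ⟨β₁, β₁∨⟩ = 2`.
-/

open scoped RealInnerProductSpace

namespace PaperDNN

variable {E : Type*} [NormedAddCommGroup E] [InnerProductSpace ℝ E]

/-- The coroot pairing `⟨x, α∨⟩ = 2⟪x,α⟫/⟪α,α⟫`. -/
noncomputable def pair (x a : E) : ℝ := 2 * ⟪x, a⟫ / ⟪a, a⟫

/-- `Φ` is a reduced irreducible root system in the Euclidean space `E`. -/
structure IsRootSystem (Φ : Finset E) : Prop where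
  nonempty : Φ.Nonempty
  ne_zero : ∀ α ∈ Φ, α ≠ 0
  span_top : Submodule.span ℝ (Φ : Set E) = ⊤
  reduced : ∀ α ∈ Φ, ∀ t : ℝ, t • α ∈ Φ → t = 1 ∨ t = -1
  reflect_mem : ∀ α ∈ Φ, ∀ β ∈ Φ, β - pair β α • α ∈ Φ
  pair_int : ∀ α ∈ Φ, ∀ β ∈ Φ, ∃ n : ℤ, pair β α = (n : ℝ)
  irred : ∀ S T : Set E, S ∪ T = (Φ : Set E) → S.Nonempty → T.Nonempty →
      (∀ a ∈ S, ∀ b ∈ T, ⟪a, b⟫ = 0) → False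

/-- `Δ` is a base of simple roots for `Φ`: every root is a nonnegative or
nonpositive integral combination of the simple roots. -/
structure IsBase (Φ Δ : Finset E) : Prop where
  subset : Δ ⊆ Φ
  indep : LinearIndependent ℝ (fun a : {x // x ∈ Δ} => (a : E))
  root_decomp : ∀ β ∈ Φ, (∃ c : E → ℕ, β = ∑ α ∈ Δ, (c α : ℝ) • α) ∨
      (∃ c : E → ℕ, β = -(∑ α ∈ Δ, (c α : ℝ) • α))

open Classical in
/-- The positive roots `Φ⁺` of `Φ` with respect to the base `Δ`. -/
noncomputable def posRoots (Φ Δ : Finset E) : Finset E :=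
  Φ.filter fun β => ∃ c : E → ℕ, β = ∑ α ∈ Δ, (c α : ℝ) • α

/-- `ρ`, one-half the sum of the positive roots. -/
noncomputable def rho (Φ Δ : Finset E) : E := (2⁻¹ : ℝ) • ∑ β ∈ posRoots Φ Δ, β

/-- The Weyl group of `Φ`, the subgroup of `GL(E)` generated by the reflections
`s_α : x ↦ x − ⟨x,α∨⟩α` in the roots `α ∈ Φ`.  Applied to a subset `J` of the
simple roots it yields the parabolic subgroup `W_J`. -/
def Weyl (Φ : Finset E) : Subgroup (E ≃ₗ[ℝ] E) :=
  Subgroup.closure { w : E ≃ₗ[ℝ] E | ∃ α ∈ Φ, ∀ x, w x = x - pair x α • α }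

/-- The dot action `w·λ = w(λ+ρ) − ρ`. -/
noncomputable def dotAct (Φ Δ : Finset E) (w : E ≃ₗ[ℝ] E) (lam : E) : E :=
  w (lam + rho Φ Δ) - rho Φ Δ

/-- The weight lattice `X = {λ ∈ E : ⟨λ,α∨⟩ ∈ ℤ for all α ∈ Φ}`. -/
def weightLattice (Φ : Finset E) : Set E :=
  { lam | ∀ α ∈ Φ, ∃ n : ℤ, pair lam α = (n : ℝ) }

/-- The root lattice `ℤΦ`. -/
def rootLattice (Φ : Finset E) : AddSubgroup E := AddSubgroup.closure (Φ : Set E)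

/-- The bottom `p`-alcove `C_ℤ = {λ ∈ X : 0 < ⟨λ+ρ,β∨⟩ < p for all β ∈ Φ⁺}`. -/
def bottomAlcove (Φ Δ : Finset E) (p : ℕ) : Set E :=
  { lam ∈ weightLattice Φ | ∀ β ∈ posRoots Φ Δ,
      0 < pair (lam + rho Φ Δ) β ∧ pair (lam + rho Φ Δ) β < (p : ℝ) }

/-- The closure `C̄_ℤ = {λ ∈ X : 0 ≤ ⟨λ+ρ,β∨⟩ ≤ p for all β ∈ Φ⁺}` of the
bottom `p`-alcove. -/
def closedAlcove (Φ Δ : Finset E) (p : ℕ) : Set E :=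
  { lam ∈ weightLattice Φ | ∀ β ∈ posRoots Φ Δ,
      0 ≤ pair (lam + rho Φ Δ) β ∧ pair (lam + rho Φ Δ) β ≤ (p : ℝ) }

/-- Membership in `X⁺`, the set of dominant weights. -/
def isDominant (Φ Δ : Finset E) (lam : E) : Prop :=
  lam ∈ weightLattice Φ ∧ ∀ α ∈ Δ, 0 ≤ pair lam α

/-- `a₀` is the highest short root of `Φ`: a root of minimal length such that
every root of the same length is `≤ a₀` (their difference is a nonnegative
integral combination of simple roots). -/
structure IsHighestShortRoot (Φ Δ : Finset E) (a₀ : E) : Prop where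
  mem : a₀ ∈ Φ
  short : ∀ β ∈ Φ, ⟪a₀, a₀⟫ ≤ ⟪β, β⟫
  highest : ∀ β ∈ Φ, ⟪β, β⟫ = ⟪a₀, a₀⟫ →
      ∃ c : E → ℕ, a₀ - β = ∑ α ∈ Δ, (c α : ℝ) • α

section Pair

variable {a b : E}

lemma pair_add_left (x y a : E) : pair (x + y) a = pair x a + pair y a := by
  simp only [pair, inner_add_left]
  ring

lemma pair_smul_left (r : ℝ) (x a : E) : pair (r • x) a = r * pair x a := by
  simp only [pair, real_inner_smul_left]
  ring

lemma pair_neg_right (x a : E) : pair x (-a) = -pair x a := by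
  simp [pair, neg_div]

lemma pair_self (ha : a ≠ 0) : pair a a = 2 :=
  mul_div_cancel_right₀ 2 (inner_self_ne_zero.mpr ha)

lemma pair_le_iff (ha : a ≠ 0) {x : E} {r : ℝ} : pair x a ≤ r ↔ 2 * ⟪x, a⟫ ≤ r * ⟪a, a⟫ :=
  div_le_iff₀ (real_inner_self_pos.mpr ha)

lemma pair_neg_comm (ha : a ≠ 0) (hb : b ≠ 0) : pair a b < 0 ↔ pair b a < 0 := by
  rw [pair, pair, div_lt_iff₀ (real_inner_self_pos.mpr hb),
    div_lt_iff₀ (real_inner_self_pos.mpr ha), zero_mul, zero_mul, real_inner_comm]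

lemma pair_multiset_sum_nonneg {s : Multiset E} (hs : ∀ b ∈ s, 0 ≤ pair b a) :
    0 ≤ pair s.sum a := by
  refine Multiset.sum_induction (0 ≤ pair · a) s (fun x y hx hy => ?_) (by simp [pair]) hs
  rw [pair_add_left]
  exact add_nonneg hx hy

lemma add_eq_zero_of_pair_le_neg_two (ha : a ≠ 0) (hb : b ≠ 0)
    (hab : pair a b ≤ -2) (hba : pair b a ≤ -2) : a + b = 0 := by
  rw [pair_le_iff hb] at hab
  rw [pair_le_iff ha, real_inner_comm] at hba
  have norm_sq_nonpos : ⟪a + b, a + b⟫ ≤ 0 := by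
    rw [real_inner_add_add_self]
    linarith
  exact real_inner_self_nonpos.mp norm_sq_nonpos

lemma sub_pair_smul_eq_reflection (x a : E) : x - pair x a • a = (ℝ ∙ a)ᗮ.reflection x := by
  rw [Submodule.reflection_orthogonal_apply, Submodule.reflection_singleton_apply, neg_sub, pair,
    real_inner_comm, real_inner_self_eq_norm_sq, mul_div_assoc, mul_smul, ofNat_smul_eq_nsmul,
    RCLike.ofReal_real_eq_id, id]

end Pair

/-- A finite crystallographic root system that may be non-reduced or reducible and need not span
`E`. -/
structure IsCrystallographic (Φ : Finset E) : Prop where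
  ne_zero : ∀ α ∈ Φ, α ≠ 0
  reflect_mem : ∀ α ∈ Φ, ∀ β ∈ Φ, β - pair β α • α ∈ Φ
  pair_int : ∀ α ∈ Φ, ∀ β ∈ Φ, ∃ n : ℤ, pair β α = (n : ℝ)

/-- The open ball of radius `r` around `0` for the seminorm `x ↦ max_β |⟨x, β∨⟩|`: a Weyl-invariant
region that contains `ρ + C_ℤ` when `r = p`. -/
def corootBall (Φ : Finset E) (r : ℝ) : Set E :=
  { x | ∀ β ∈ Φ, |pair x β| < r }

section RootSystem

variable {Φ Δ : Finset E} {w : E ≃ₗ[ℝ] E}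

lemma IsRootSystem.isCrystallographic (hΦ : IsRootSystem Φ) : IsCrystallographic Φ :=
  ⟨hΦ.ne_zero, hΦ.reflect_mem, hΦ.pair_int⟩

lemma inner_map_map_of_mem_weyl (hw : w ∈ Weyl Φ) (x y : E) : ⟪w x, w y⟫ = ⟪x, y⟫ := by
  induction hw using Subgroup.closure_induction generalizing x y with
  | mem s hs =>
    obtain ⟨α, -, hs⟩ := hs
    rw [hs, hs, sub_pair_smul_eq_reflection, sub_pair_smul_eq_reflection,
      LinearIsometryEquiv.inner_map_map]
  | one => rfl
  | mul v w _ _ hv hw => exact (hv (w x) (w y)).trans (hw x y)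
  | inv w _ hw => simpa using! (hw (w.symm x) (w.symm y)).symm

lemma pair_map_map_of_mem_weyl (hw : w ∈ Weyl Φ) (x a : E) : pair (w x) (w a) = pair x a := by
  simp only [pair, inner_map_map_of_mem_weyl hw]

namespace IsCrystallographic

lemma neg_mem (hΦ : IsCrystallographic Φ) {α : E} (hα : α ∈ Φ) : -α ∈ Φ := by
  have h := hΦ.reflect_mem α hα α hα
  rwa [pair_self (hΦ.ne_zero α hα), two_smul, sub_add_cancel_left] at h

lemma add_mem_of_pair_eq_neg_one (hΦ : IsCrystallographic Φ) {α β : E} (hα : α ∈ Φ) (hβ : β ∈ Φ)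
    (h : pair β α = -1) : β + α ∈ Φ := by
  simpa only [h, neg_one_smul, sub_neg_eq_add] using hΦ.reflect_mem α hα β hβ

lemma pair_eq_neg_one_or_le_neg_two (hΦ : IsCrystallographic Φ) {α β : E} (hα : α ∈ Φ)
    (hβ : β ∈ Φ) (h : pair β α < 0) : pair β α = -1 ∨ pair β α ≤ -2 := by
  obtain ⟨n, hn⟩ := hΦ.pair_int α hα β hβ
  rw [hn] at h ⊢
  norm_cast at h ⊢
  lia

lemma add_mem_or_add_eq_zero (hΦ : IsCrystallographic Φ) {α β : E} (hα : α ∈ Φ) (hβ : β ∈ Φ)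
    (h : pair β α < 0) : β + α ∈ Φ ∨ β + α = 0 := by
  have hα₀ := hΦ.ne_zero α hα
  have hβ₀ := hΦ.ne_zero β hβ
  rcases hΦ.pair_eq_neg_one_or_le_neg_two hα hβ h with hβα | hβα
  · exact .inl (hΦ.add_mem_of_pair_eq_neg_one hα hβ hβα)
  rcases hΦ.pair_eq_neg_one_or_le_neg_two hβ hα ((pair_neg_comm hβ₀ hα₀).mp h) with hαβ | hαβ
  · exact .inl (add_comm β α ▸ hΦ.add_mem_of_pair_eq_neg_one hβ hα hαβ)
  · exact .inr (add_eq_zero_of_pair_le_neg_two hβ₀ hα₀ hβα hαβ)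

lemma exists_multiset_card_le_one_sum_eq_add (hΦ : IsCrystallographic Φ) {α β : E} (hα : α ∈ Φ)
    (hβ : β ∈ Φ) (h : pair β α < 0) :
    ∃ s : Multiset E, (∀ γ ∈ s, γ ∈ Φ) ∧ s.card ≤ 1 ∧ s.sum = β + α := by
  rcases hΦ.add_mem_or_add_eq_zero hα hβ h with hmem | hzero
  · exact ⟨{β + α}, by simpa using hmem, by simp, by simp⟩
  · exact ⟨0, by simp, by simp, by simp [hzero]⟩

lemma exists_multiset_of_mem_rootLattice (hΦ : IsCrystallographic Φ) {σ : E}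
    (hσ : σ ∈ rootLattice Φ) : ∃ s : Multiset E, (∀ β ∈ s, β ∈ Φ) ∧ s.sum = σ := by
  rw [rootLattice, ← AddSubgroup.mem_toAddSubmonoid, AddSubgroup.closure_toAddSubmonoid] at hσ
  obtain ⟨s, hs, hsum⟩ := AddSubmonoid.exists_multiset_of_mem_closure hσ
  refine ⟨s, fun β hβ => (hs β hβ).elim id fun hneg => ?_, hsum⟩
  exact neg_neg β ▸ hΦ.neg_mem hneg

lemma exists_two_le_pair_of_mem_rootLattice (hΦ : IsCrystallographic Φ) {σ : E}
    (hσ : σ ∈ rootLattice Φ) (hσ₀ : σ ≠ 0) : ∃ β ∈ Φ, 2 ≤ pair σ β := by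
  obtain ⟨s, ⟨hs, rfl⟩, hmin⟩ := exists_minimalFor_of_wellFoundedLT _ Multiset.card
    (hΦ.exists_multiset_of_mem_rootLattice hσ)
  obtain ⟨α, hαs⟩ := Multiset.exists_mem_of_ne_zero (s := s) (by rintro rfl; simp at hσ₀)
  obtain ⟨t, rfl⟩ := Multiset.exists_cons_of_mem hαs
  obtain ⟨hα, ht⟩ := Multiset.forall_mem_cons.mp hs
  have pair_nonneg : ∀ β ∈ t, 0 ≤ pair β α := by
    by_contra! ⟨β, hβt, hβα⟩
    obtain ⟨u, rfl⟩ := Multiset.exists_cons_of_mem hβt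
    obtain ⟨hβ, hu⟩ := Multiset.forall_mem_cons.mp ht
    obtain ⟨v, hv, hvcard, hvsum⟩ := hΦ.exists_multiset_card_le_one_sum_eq_add hα hβ hβα
    have shorter : (∀ γ ∈ v + u, γ ∈ Φ) ∧ (v + u).sum = (α ::ₘ β ::ₘ u).sum := by
      refine ⟨fun γ hγ => (Multiset.mem_add.mp hγ).elim (hv γ) (hu γ), ?_⟩
      rw [Multiset.sum_add, hvsum, Multiset.sum_cons, Multiset.sum_cons]
      abel
    have := hmin shorter
    simp only [Multiset.card_add, Multiset.card_cons] at this
    lia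
  refine ⟨α, hα, ?_⟩
  rw [Multiset.sum_cons, pair_add_left, pair_self (hΦ.ne_zero α hα)]
  exact le_add_of_nonneg_right (pair_multiset_sum_nonneg pair_nonneg)

open scoped Pointwise in
lemma weyl_le_stabilizer (hΦ : IsCrystallographic Φ) :
    Weyl Φ ≤ MulAction.stabilizer (E ≃ₗ[ℝ] E) (Φ : Set E) := by
  refine (Subgroup.closure_le _).mpr ?_
  rintro s ⟨α, hα, hs⟩
  refine (MulAction.mem_stabilizer_set' Φ.finite_toSet).mpr fun β hβ => ?_
  rw [LinearEquiv.smul_def, hs]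
  exact hΦ.reflect_mem α hα β hβ

lemma map_mem_of_mem_weyl (hΦ : IsCrystallographic Φ) (hw : w ∈ Weyl Φ) {β : E} (hβ : β ∈ Φ) :
    w β ∈ Φ :=
  (MulAction.mem_stabilizer_set' Φ.finite_toSet).mp (hΦ.weyl_le_stabilizer hw) hβ

lemma map_mem_corootBall (hΦ : IsCrystallographic Φ) (hw : w ∈ Weyl Φ) {r : ℝ} {x : E}
    (hx : x ∈ corootBall Φ r) : w x ∈ corootBall Φ r := by
  intro β hβ
  rw [← w.apply_symm_apply β, pair_map_map_of_mem_weyl hw]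
  exact hx _ (hΦ.map_mem_of_mem_weyl (inv_mem hw) hβ)

lemma mem_posRoots_or_neg_mem_posRoots (hΦ : IsCrystallographic Φ) (hΔ : IsBase Φ Δ) {β : E}
    (hβ : β ∈ Φ) : β ∈ posRoots Φ Δ ∨ -β ∈ posRoots Φ Δ := by
  simp only [posRoots, Finset.mem_filter, neg_eq_iff_eq_neg]
  exact (hΔ.root_decomp β hβ).imp (⟨hβ, ·⟩) (⟨hΦ.neg_mem hβ, ·⟩)

lemma add_rho_mem_corootBall (hΦ : IsCrystallographic Φ) (hΔ : IsBase Φ Δ) {p : ℕ} {lam : E}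
    (hlam : lam ∈ bottomAlcove Φ Δ p) : lam + rho Φ Δ ∈ corootBall Φ p := by
  have abs_pair_lt : ∀ β ∈ posRoots Φ Δ, |pair (lam + rho Φ Δ) β| < p := fun β hβ =>
    (abs_of_pos (hlam.2 β hβ).1).trans_lt (hlam.2 β hβ).2
  intro β hβ
  rcases hΦ.mem_posRoots_or_neg_mem_posRoots hΔ hβ with hpos | hneg
  · exact abs_pair_lt β hpos
  · simpa only [pair_neg_right, abs_neg] using abs_pair_lt (-β) hneg

lemma eq_zero_of_eq_add_smul (hΦ : IsCrystallographic Φ) {r : ℝ} {x y σ : E}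
    (hx : x ∈ corootBall Φ r) (hy : y ∈ corootBall Φ r) (hσ : σ ∈ rootLattice Φ)
    (h : x = y + r • σ) : σ = 0 := by
  by_contra hσ₀
  obtain ⟨β, hβ, two_le⟩ := hΦ.exists_two_le_pair_of_mem_rootLattice hσ hσ₀
  have r_pos : 0 < r := (abs_nonneg _).trans_lt (hx β hβ)
  have lt_two : pair σ β < 2 := by
    refine lt_of_mul_lt_mul_left ?_ r_pos.le
    calc r * pair σ β = pair x β - pair y β := by rw [h, pair_add_left, pair_smul_left]; ring
      _ < r - -r := sub_lt_sub (abs_lt.mp (hx β hβ)).2 (abs_lt.mp (hy β hβ)).1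
      _ = r * 2 := by ring
  exact two_le.not_gt lt_two

end IsCrystallographic

theorem statement0_general (hΦ : IsCrystallographic Φ) {r : ℝ} {w₁ w₂ : E ≃ₗ[ℝ] E}
    (hw₁ : w₁ ∈ Weyl Φ) (hw₂ : w₂ ∈ Weyl Φ) {x y : E}
    (hx : x ∈ corootBall Φ r) (hy : y ∈ corootBall Φ r) {σ : E} (hσ : σ ∈ rootLattice Φ)
    (heq : w₁ x = w₂ y + r • σ) : σ = 0 :=
  hΦ.eq_zero_of_eq_add_smul (hΦ.map_mem_corootBall hw₁ hx) (hΦ.map_mem_corootBall hw₂ hy) hσ heq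

end RootSystem

/-- Let `p` be a prime (the statement in fact holds for any positive
integer `p`).  Let `w₁, w₂` be elements of the Weyl group `W`, let `λ ∈ C_ℤ`, and
let `σ ∈ ℤΦ` be an element of the root lattice.  If `w₁·λ = w₂·λ + pσ`, then `σ = 0`. -/
theorem statement0
    (Φ Δ : Finset E) (hΦ : IsRootSystem Φ) (hΔ : IsBase Φ Δ)
    (p : ℕ) (hp : p.Prime)
    (w₁ w₂ : E ≃ₗ[ℝ] E) (hw₁ : w₁ ∈ Weyl Φ) (hw₂ : w₂ ∈ Weyl Φ)
    (lam : E) (hlam : lam ∈ bottomAlcove Φ Δ p)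
    (σ : E) (hσ : σ ∈ rootLattice Φ)
    (heq : dotAct Φ Δ w₁ lam = dotAct Φ Δ w₂ lam + (p : ℝ) • σ) :
    σ = 0 := by
  have hx := hΦ.isCrystallographic.add_rho_mem_corootBall hΔ hlam
  exact statement0_general hΦ.isCrystallographic hw₁ hw₂ hx hx hσ
    (by simpa only [dotAct, sub_add_eq_add_sub, sub_left_inj] using heq)

end PaperDNN
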